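/- Let F be a monotone hazard rate probability distribution supported on the non-negative reals with density f and strictly increasing virtual valuation φ. Then R*_F ≥ V_F / e, i.e., φ⁻¹(0)·(1−F(φ⁻¹(0))) ≥ (1/e)·∫₀^∞ z·f(z) dz. -/

import Mathlib

open MeasureTheory Real Set

/-! Since `(log (1 - F))' = -h` and the hazard rate `h` is monotone, `log (1 - F)` lies below its
tangent at every `r`, that is, `1 - F z ≤ (1 - F r) * exp (-h r * (z - r))`. Integrating this bound
over `[0, ∞)`, where the left-hand side contributes the mean, gives
`V ≤ (1 - F r) * exp (h r * r) / h r`. A zero `r` of the virtual valuation satisfies `h r = 1 / r`,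
and the bound becomes `e * r * (1 - F r)`.

A monotone hazard rate has only countably many discontinuities, so `F` is differentiable with
derivative `f` off a countable set, which suffices for the fundamental theorem of calculus. -/

/-- The hazard rate `f / (1 - F)` of a distribution with density `f` and cumulative distribution
function `F`. Where `F z = 1` it is `0` by the convention on division. -/
noncomputable def hazardRate (f F : ℝ → ℝ) (z : ℝ) : ℝ :=
  f z / (1 - F z)

/-- Myerson's virtual valuation `z - (1 - F z) / f z`, whose zero is the optimal price offered to a
single agent. Where the density `f` vanishes it is `z` by the convention on division. -/
noncomputable def virtualValuation (f F : ℝ → ℝ) (z : ℝ) : ℝ :=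
  z - (1 - F z) / f z

theorem mul_sub_le_intervalIntegral_of_monotoneOn {h : ℝ → ℝ} {a b : ℝ}
    (hh : MonotoneOn h (uIcc a b)) : h a * (b - a) ≤ ∫ x in a..b, h x := by
  have hconst : ∫ _ in a..b, h a = h a * (b - a) := by
    rw [intervalIntegral.integral_const, smul_eq_mul, mul_comm]
  rw [← hconst]
  rcases le_total a b with hab | hba
  · refine intervalIntegral.integral_mono_on hab intervalIntegrable_const hh.intervalIntegrable ?_
    rw [uIcc_of_le hab] at hh
    exact fun x hx => hh (left_mem_Icc.2 hab) hx hx.1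
  · rw [intervalIntegral.integral_symm b a, intervalIntegral.integral_symm b a, neg_le_neg_iff]
    refine intervalIntegral.integral_mono_on hba hh.intervalIntegrable.symm
      intervalIntegrable_const ?_
    rw [uIcc_of_ge hba] at hh
    exact fun x hx => hh hx (right_mem_Icc.2 hba) hx.2

theorem intervalIntegrable_of_integrableOn_Ioi {f : ℝ → ℝ} {a b c : ℝ}
    (hf : IntegrableOn f (Ioi c)) (ha : c ≤ a) (hb : c ≤ b) : IntervalIntegrable f volume a b :=
  intervalIntegrable_iff.2 (hf.mono_set fun _ hx => (le_min ha hb).trans_lt hx.1)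

theorem intervalIntegral_id_mul_eq_sub_integral_primitive {f : ℝ → ℝ} {a b : ℝ}
    (hf : IntervalIntegrable f volume a b) :
    ∫ x in a..b, x * f x = b * (∫ x in a..b, f x) - ∫ x in a..b, ∫ t in a..x, f t := by
  have hderiv : ∫ x in a..b, x * f x = ∫ x in a..b, x * deriv (fun y => ∫ t in a..y, f t) x := by
    refine intervalIntegral.integral_congr_ae ?_
    filter_upwards [hf.ae_hasDerivAt_integral] with x hx hx_mem
    rw [(hx (uIoc_subset_uIcc hx_mem) a left_mem_uIcc).deriv]
  have hid : AbsolutelyContinuousOnInterval (fun x : ℝ => x) a b :=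
    contDiffOn_id.absolutelyContinuousOnInterval
  rw [hderiv, hid.integral_mul_deriv_eq_deriv_mul
    (hf.absolutelyContinuousOnInterval_intervalIntegral left_mem_uIcc)]
  simp only [deriv_id'', one_mul, intervalIntegral.integral_same, mul_zero, sub_zero]

section Cdf

variable {f F : ℝ → ℝ} {a b r z : ℝ}

theorem countable_not_continuousAt_density (hF_cont : ContinuousOn F (Ici 0))
    (hF_lt : ∀ z ∈ Ici (0 : ℝ), F z < 1) (hMHR : MonotoneOn (hazardRate f F) (Ici 0)) :
    {z ∈ Ioi (0 : ℝ) | ¬ContinuousAt f z}.Countable := by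
  refine hMHR.countable_not_continuousWithinAt.mono ?_
  rintro z ⟨hz, hfz⟩
  refine ⟨(mem_Ioi.1 hz).le, fun hh => hfz ?_⟩
  have hz_nhds : Ici (0 : ℝ) ∈ nhds z := Ici_mem_nhds hz
  have hprod : ContinuousAt (fun x => hazardRate f F x * (1 - F x)) z :=
    (hh.continuousAt hz_nhds).mul (continuousAt_const.sub (hF_cont.continuousAt hz_nhds))
  refine hprod.congr ?_
  filter_upwards [hz_nhds] with x hx
  exact div_mul_cancel₀ _ (sub_pos.2 (hF_lt x hx)).ne'

theorem continuousOn_cdf (hf : IntegrableOn f (Ioi 0))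
    (hF : ∀ z ∈ Ici (0 : ℝ), F z = ∫ t in (0 : ℝ)..z, f t) : ContinuousOn F (Ici 0) := by
  have htail : ContinuousOn (fun z => (∫ t in Ioi 0, f t) - ∫ t in Ioi z, f t) (Ici 0) :=
    continuousOn_const.sub (IntegrableOn.continuousOn_Ici_primitive_Ioi hf)
  refine htail.congr fun z hz => ?_
  rw [hF z hz, ← intervalIntegral.integral_Ioi_sub_Ioi hf hz]

theorem hasDerivAt_cdf (hf : IntegrableOn f (Ioi 0))
    (hF : ∀ z ∈ Ici (0 : ℝ), F z = ∫ t in (0 : ℝ)..z, f t) (hz : 0 < z)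
    (hfz : ContinuousAt f z) : HasDerivAt F (f z) z := by
  have hmeas : StronglyMeasurableAtFilter f (nhds z) :=
    ⟨Ioi 0, Ioi_mem_nhds hz, hf.aestronglyMeasurable⟩
  refine (intervalIntegral.integral_hasDerivAt_right
    (intervalIntegrable_of_integrableOn_Ioi hf le_rfl hz.le) hmeas hfz).congr_of_eventuallyEq ?_
  filter_upwards [Ioi_mem_nhds hz] with x hx using hF x (mem_Ioi.1 hx).le

theorem intervalIntegral_id_mul_density_eq (hf : IntegrableOn f (Ioi 0))
    (hF : ∀ z ∈ Ici (0 : ℝ), F z = ∫ t in (0 : ℝ)..z, f t) (hb : 0 ≤ b) :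
    ∫ z in (0 : ℝ)..b, z * f z = (∫ z in (0 : ℝ)..b, (1 - F z)) - b * (1 - F b) := by
  have hint := intervalIntegrable_of_integrableOn_Ioi hf le_rfl hb
  have hcongr : ∫ z in (0 : ℝ)..b, ∫ t in (0 : ℝ)..z, f t = ∫ z in (0 : ℝ)..b, F z :=
    intervalIntegral.integral_congr fun z hz =>
      (hF z ((le_min le_rfl hb).trans hz.1)).symm
  have hF_int : IntervalIntegrable F volume 0 b :=
    ((continuousOn_cdf hf hF).mono fun z hz => (le_min le_rfl hb).trans hz.1).intervalIntegrable
  rw [intervalIntegral_id_mul_eq_sub_integral_primitive hint, hcongr, ← hF b hb,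
    intervalIntegral.integral_sub intervalIntegrable_const hF_int, intervalIntegral.integral_const,
    smul_eq_mul]
  ring

theorem integral_id_mul_density_le_integral_one_sub_cdf (hf : IntegrableOn f (Ioi 0))
    (hF : ∀ z ∈ Ici (0 : ℝ), F z = ∫ t in (0 : ℝ)..z, f t)
    (hF_lt : ∀ z ∈ Ici (0 : ℝ), F z < 1) (hmean : IntegrableOn (fun z => z * f z) (Ioi 0))
    (hS : IntegrableOn (fun z => 1 - F z) (Ioi 0)) :
    ∫ z in Ioi (0 : ℝ), z * f z ≤ ∫ z in Ioi (0 : ℝ), (1 - F z) := by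
  refine le_of_tendsto_of_tendsto
    (intervalIntegral_tendsto_integral_Ioi 0 hmean Filter.tendsto_id)
    (intervalIntegral_tendsto_integral_Ioi 0 hS Filter.tendsto_id) ?_
  filter_upwards [Filter.eventually_ge_atTop 0] with b hb
  rw [id, intervalIntegral_id_mul_density_eq hf hF hb, sub_le_self_iff]
  exact mul_nonneg hb (sub_pos.2 (hF_lt b hb)).le

theorem integral_hazardRate (hf : IntegrableOn f (Ioi 0))
    (hF : ∀ z ∈ Ici (0 : ℝ), F z = ∫ t in (0 : ℝ)..z, f t)
    (hF_lt : ∀ z ∈ Ici (0 : ℝ), F z < 1) (hMHR : MonotoneOn (hazardRate f F) (Ici 0))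
    (ha : 0 ≤ a) (hb : 0 ≤ b) :
    ∫ z in a..b, hazardRate f F z = log (1 - F a) - log (1 - F b) := by
  have hF_cont := continuousOn_cdf hf hF
  have hab : uIcc a b ⊆ Ici 0 := fun x hx => (le_min ha hb).trans hx.1
  have hS : ∀ z ∈ Ici (0 : ℝ), 1 - F z ≠ 0 := fun z hz => (sub_pos.2 (hF_lt z hz)).ne'
  rw [integral_eq_of_hasDerivAt_off_countable (fun z => -log (1 - F z)) (hazardRate f F)
    (countable_not_continuousAt_density hF_cont hF_lt hMHR)]
  · ring
  · exact ((continuousOn_const.sub (hF_cont.mono hab)).log fun z hz => hS z (hab hz)).neg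
  · rintro z ⟨hz, hfz⟩
    have hz_pos : 0 < z := (le_min ha hb).trans_lt hz.1
    have hderiv := hasDerivAt_cdf hf hF hz_pos (not_not.1 fun h => hfz ⟨hz_pos, h⟩)
    simpa only [hazardRate, neg_div, neg_neg] using
      ((hderiv.const_sub 1).log (hS z hz_pos.le)).fun_neg
  · exact (hMHR.mono hab).intervalIntegrable

theorem one_sub_cdf_le_mul_exp (hf : IntegrableOn f (Ioi 0))
    (hF : ∀ z ∈ Ici (0 : ℝ), F z = ∫ t in (0 : ℝ)..z, f t)
    (hF_lt : ∀ z ∈ Ici (0 : ℝ), F z < 1) (hMHR : MonotoneOn (hazardRate f F) (Ici 0))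
    (hr : 0 ≤ r) (hz : 0 ≤ z) :
    1 - F z ≤ (1 - F r) * exp (-hazardRate f F r * (z - r)) := by
  have hSr : 0 < 1 - F r := sub_pos.2 (hF_lt r hr)
  have hSz : 0 < 1 - F z := sub_pos.2 (hF_lt z hz)
  have htangent : hazardRate f F r * (z - r) ≤ log (1 - F r) - log (1 - F z) := by
    rw [← integral_hazardRate hf hF hF_lt hMHR hr hz]
    exact mul_sub_le_intervalIntegral_of_monotoneOn
      (hMHR.mono fun x hx => (le_min hr hz).trans hx.1)
  rw [← log_le_log_iff hSz (by positivity), log_mul hSr.ne' (exp_ne_zero _), log_exp]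
  linarith

theorem integral_id_mul_density_le_mul_exp_div_hazardRate (hf : IntegrableOn f (Ioi 0))
    (hF : ∀ z ∈ Ici (0 : ℝ), F z = ∫ t in (0 : ℝ)..z, f t)
    (hF_lt : ∀ z ∈ Ici (0 : ℝ), F z < 1) (hMHR : MonotoneOn (hazardRate f F) (Ici 0))
    (hmean : IntegrableOn (fun z => z * f z) (Ioi 0)) (hr : 0 ≤ r)
    (hhr : 0 < hazardRate f F r) :
    ∫ z in Ioi (0 : ℝ), z * f z ≤
      (1 - F r) * exp (hazardRate f F r * r) / hazardRate f F r := by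
  have hbound : ∀ z ∈ Ioi (0 : ℝ),
      1 - F z ≤ (1 - F r) * exp (hazardRate f F r * r) * exp (-hazardRate f F r * z) := by
    intro z hz
    rw [mul_assoc, ← exp_add]
    convert one_sub_cdf_le_mul_exp hf hF hF_lt hMHR hr (mem_Ioi.1 hz).le using 3
    ring
  have hexp := (integrableOn_exp_mul_Ioi (neg_neg_of_pos hhr) 0).const_mul
    ((1 - F r) * exp (hazardRate f F r * r))
  have hS_cont : ContinuousOn (fun z => 1 - F z) (Ioi 0) :=
    continuousOn_const.sub ((continuousOn_cdf hf hF).mono Ioi_subset_Ici_self)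
  have hS : IntegrableOn (fun z => 1 - F z) (Ioi 0) := by
    refine hexp.mono' (hS_cont.aestronglyMeasurable measurableSet_Ioi) ?_
    refine (ae_restrict_iff' measurableSet_Ioi).2 (.of_forall fun z hz => ?_)
    rw [norm_of_nonneg (sub_pos.2 (hF_lt z (mem_Ioi.1 hz).le)).le]
    exact hbound z hz
  calc ∫ z in Ioi (0 : ℝ), z * f z
      ≤ ∫ z in Ioi (0 : ℝ), (1 - F z) :=
        integral_id_mul_density_le_integral_one_sub_cdf hf hF hF_lt hmean hS
    _ ≤ ∫ z in Ioi (0 : ℝ),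
          (1 - F r) * exp (hazardRate f F r * r) * exp (-hazardRate f F r * z) :=
        setIntegral_mono_on hS hexp measurableSet_Ioi hbound
    _ = (1 - F r) * exp (hazardRate f F r * r) / hazardRate f F r := by
        rw [integral_const_mul, integral_exp_mul_Ioi (neg_neg_of_pos hhr), mul_zero, exp_zero,
          neg_div_neg_eq, mul_one_div]

end Cdf

theorem stmt_1_general {f F : ℝ → ℝ} (hf : IntegrableOn f (Ioi 0))
    (hF : ∀ z ∈ Ici (0 : ℝ), F z = ∫ t in (0 : ℝ)..z, f t)
    (hF_lt : ∀ z ∈ Ici (0 : ℝ), F z < 1) (hMHR : MonotoneOn (hazardRate f F) (Ici 0))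
    (hmean : IntegrableOn (fun z => z * f z) (Ioi 0))
    {r : ℝ} (hr : 0 ≤ r) (hfr : 0 < f r) (hφr : virtualValuation f F r = 0) :
    r * (1 - F r) ≥ (1 / exp 1) * ∫ z in Ioi (0 : ℝ), z * f z := by
  have hSr : 0 < 1 - F r := sub_pos.2 (hF_lt r hr)
  have hhr : 0 < hazardRate f F r := div_pos hfr hSr
  have hr_eq : r = (hazardRate f F r)⁻¹ := by
    rw [hazardRate, inv_div]
    exact sub_eq_zero.1 hφr
  have hhr_mul : hazardRate f F r * r = 1 := (mul_eq_one_iff_inv_eq₀ hhr.ne').2 hr_eq.symm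
  have hmean_le := integral_id_mul_density_le_mul_exp_div_hazardRate hf hF hF_lt hMHR hmean hr hhr
  rw [hhr_mul, div_eq_mul_inv, ← hr_eq] at hmean_le
  rw [ge_iff_le, one_div, inv_mul_le_iff₀ (exp_pos 1)]
  linarith

theorem stmt_1
(f F : ℝ → ℝ)
    (hf_cont : ContinuousOn f (Ici 0))
    (hf_pos : ∀ z ∈ Ici (0:ℝ), 0 < f z)
    (hF : ∀ z ∈ Ici (0:ℝ), F z = ∫ t in (0:ℝ)..z, f t)
    (hF_lt : ∀ z ∈ Ici (0:ℝ), F z < 1)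
    (hprob : ∫ z in Ioi (0:ℝ), f z = 1)
(hMHR : ∀ y z : ℝ, 0 ≤ y → y ≤ z → f y / (1 - F y) ≤ f z / (1 - F z))
(φ ψ : ℝ → ℝ)
    (hφ : ∀ z ∈ Ici (0:ℝ), φ z = z - (1 - F z) / f z)
    (hφ_mono : StrictMonoOn φ (Ici 0))
    (hφ_top : Filter.Tendsto φ Filter.atTop Filter.atTop)
    (hψ : ∀ y ∈ Ici (0:ℝ), ψ y ∈ Ici (0:ℝ) ∧ φ (ψ y) = y)
(hmean : IntegrableOn (fun z => z * f z) (Ioi 0)) :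
    ψ 0 * (1 - F (ψ 0)) ≥ (1 / Real.exp 1) * ∫ z in Ioi (0:ℝ), z * f z := by
  obtain ⟨hr, hφr⟩ := hψ 0 self_mem_Ici
  exact stmt_1_general (.of_integral_ne_zero (by simp [hprob])) hF hF_lt
    (fun y hy z _ hyz => hMHR y z hy hyz) hmean hr (hf_pos _ hr) ((hφ _ hr).symm.trans hφr)
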